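/- Assume the Continuum Hypothesis. Let X be a productively quasi-Lindelöf topological space such that the Lindelöf number of X^ω is at most 𝔠. Then X is powerfully quasi-Lindelöf. -/

import Mathlib

open Set Cardinal Topology

universe u v

/-- A space is quasi-Lindelöf if every open cover has a countable subcover
(no separation axioms assumed). -/
def QuasiLindelofSp (X : Type u) [TopologicalSpace X] : Prop :=
  ∀ 𝒰 : Set (Set X), (∀ U ∈ 𝒰, IsOpen U) → ⋃₀ 𝒰 = Set.univ →
    ∃ 𝒱 ⊆ 𝒰, 𝒱.Countable ∧ ⋃₀ 𝒱 = Set.univ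

/-- Lindelöf in the sense of Engelking: regular (T3, including T1) and
every open cover has a countable subcover. -/
def EngLindelofSp (X : Type u) [TopologicalSpace X] : Prop :=
  RegularSpace X ∧ T1Space X ∧ QuasiLindelofSp X

/-- X is productively Lindelöf if X × Y is Lindelöf for every Lindelöf space Y. -/
def ProductivelyLindelofSp (X : Type u) [TopologicalSpace X] : Prop :=
  ∀ (Y : Type u) [TopologicalSpace Y], EngLindelofSp Y → EngLindelofSp (X × Y)

/-- X is productively quasi-Lindelöf if X × Y is quasi-Lindelöf for every Lindelöf space Y. -/
def ProductivelyQuasiLindelofSp (X : Type u) [TopologicalSpace X] : Prop :=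
  ∀ (Y : Type u) [TopologicalSpace Y], EngLindelofSp Y → QuasiLindelofSp (X × Y)

/-- X is powerfully Lindelöf if X^ω is Lindelöf. -/
def PowerfullyLindelofSp (X : Type u) [TopologicalSpace X] : Prop :=
  EngLindelofSp (ℕ → X)

/-- X is powerfully quasi-Lindelöf if X^ω is quasi-Lindelöf. -/
def PowerfullyQuasiLindelofSp (X : Type u) [TopologicalSpace X] : Prop :=
  QuasiLindelofSp (ℕ → X)

/-- Tightness of X is at most κ. -/
def TightnessLE (X : Type u) [TopologicalSpace X] (κ : Cardinal.{u}) : Prop :=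
  ∀ (A : Set X) (x : X), x ∈ closure A → ∃ B ⊆ A, #B ≤ κ ∧ x ∈ closure B

/-- X has countable tightness. -/
def CountableTightness (X : Type u) [TopologicalSpace X] : Prop :=
  ∀ (A : Set X) (x : X), x ∈ closure A → ∃ B ⊆ A, B.Countable ∧ x ∈ closure B

/-- The Lindelöf number of X is at most κ: every open cover has a subcover of size ≤ κ. -/
def LindelofNumberLE (X : Type u) [TopologicalSpace X] (κ : Cardinal.{u}) : Prop :=
  ∀ 𝒰 : Set (Set X), (∀ U ∈ 𝒰, IsOpen U) → ⋃₀ 𝒰 = Set.univ →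
    ∃ 𝒱 ⊆ 𝒰, #𝒱 ≤ κ ∧ ⋃₀ 𝒱 = Set.univ

/-- The weight of X is at most κ: there is a base of size ≤ κ. -/
def WeightLE (X : Type u) [TopologicalSpace X] (κ : Cardinal.{u}) : Prop :=
  ∃ B : Set (Set X), TopologicalSpace.IsTopologicalBasis B ∧ #B ≤ κ

/-- N is a network for X. -/
def IsNetwork (X : Type u) [TopologicalSpace X] (N : Set (Set X)) : Prop :=
  ∀ (x : X) (U : Set X), IsOpen U → x ∈ U → ∃ n ∈ N, x ∈ n ∧ n ⊆ U

/-- X is linearly Lindelöf: regular (incl. T1) and every open cover linearly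
ordered by inclusion has a countable subcover. -/
def LinearlyLindelofSp (X : Type u) [TopologicalSpace X] : Prop :=
  RegularSpace X ∧ T1Space X ∧
    ∀ 𝒰 : Set (Set X), (∀ U ∈ 𝒰, IsOpen U) → IsChain (· ⊆ ·) 𝒰 → ⋃₀ 𝒰 = Set.univ →
      ∃ 𝒱 ⊆ 𝒰, 𝒱.Countable ∧ ⋃₀ 𝒱 = Set.univ

/-- U ⊆ X^ω is a basic open set: a product of open sets, all but finitely many of
which equal X. -/
def IsBasicOpen (X : Type u) [TopologicalSpace X] (U : Set (ℕ → X)) : Prop :=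
  ∃ V : ℕ → Set X, (∀ i, IsOpen (V i)) ∧ {i | V i ≠ Set.univ}.Finite ∧
    U = Set.pi Set.univ V

/-- A family of subsets of Z is point-κ if every point belongs to at most κ members. -/
def PointLE {Z : Type u} (𝒲 : Set (Set Z)) (κ : Cardinal.{u}) : Prop :=
  ∀ z : Z, #({W ∈ 𝒲 | z ∈ W}) ≤ κ

/-- A non-empty space is zero-dimensional if it is T1 and has a base of clopen sets. -/
def ZeroDimensionalSp (Y : Type u) [TopologicalSpace Y] : Prop :=
  Nonempty Y ∧ T1Space Y ∧
    ∃ B : Set (Set Y), TopologicalSpace.IsTopologicalBasis B ∧ ∀ b ∈ B, IsClopen b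

/-!
Cover `X^ω` by `𝔠 = ℵ₁` basic boxes inside members of the given cover, list the `ℵ₁` sides of these
boxes as `W`, and pass from `X` to the set `Z = upperHull W` in the Cantor cube `2^ω₁`. This `Z` is
again productively quasi-Lindelöf, and a countable subcover for `Z^ω` pulls back to `X^ω`. So it
suffices that `Z^ω` is Lindelöf, which holds if `Z` has the Alster property: a countably complete
filter can be concentrated around a compact set in one coordinate after another, and any ultrafilter
finer than all the filters obtained converges.

Suppose that `Z` is not Alster. Then some countably complete filter `l` on `Z` makes every compact
`C ⊆ Z` small, in that the complement of a saturation of `C` (the set of points agreeing with a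
point of `C` on an initial segment of `ω₁`) belongs to `l`. By CH there are only `ℵ₁` small closed
sets depending on countably many coordinates, so a Luzin-type construction gives an uncountable
`A ⊆ Z` meeting each of them in a countable set. Let `D` consist of the points outside some union of
a saturation of `Z` with the first countably many small closed sets. The product of `Z` with the
Michael space on `A ∪ D` contains the uncountable discrete closed diagonal of `A`, so this Michael
space is not Lindelöf, and the cluster set of a filter witnessing this is a compact set which misses
`D` and is not covered by countably many small closed sets. Projections of `Z` to countably many
coordinates are σ-compact (the same Michael space argument under CH), so Baire category and the
pressing-down lemma cut this compact set down to a compact `C ⊆ Z` that is not small.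
-/

open Filter Function

theorem quasiLindelofSp_iff_lindelofSpace {X : Type u} [TopologicalSpace X] :
    QuasiLindelofSp X ↔ LindelofSpace X := by
  rw [← isLindelof_univ_iff, isLindelof_iff_countable_subcover]
  constructor
  · intro h κ U hU hcover
    obtain ⟨𝒱, hsub, hcount, hcov⟩ :=
      h (range U) (forall_mem_range.2 hU) (univ_subset_iff.1 (by rwa [sUnion_range]))
    obtain ⟨t, rfl, ht⟩ := exists_image_eq_injOn_of_subset_range hsub
    exact ⟨t, countable_of_injective_of_countable_image ht hcount,
      by rw [← sUnion_image, hcov]⟩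
  · intro h 𝒰 hU hcover
    obtain ⟨t, ht, hcov⟩ := h (fun U : 𝒰 => (U : Set X)) (fun U => hU U U.2)
      (by rw [← sUnion_eq_iUnion, hcover])
    exact ⟨(↑) '' t, by simp, ht.image _, by simpa [sUnion_image, univ_subset_iff] using hcov⟩

section Filters

theorem isLindelof_preimage_of_isProperMap {X : Type u} {Y : Type v} [TopologicalSpace X]
    [TopologicalSpace Y] {f : X → Y} (hf : IsProperMap f) {s : Set Y} (hs : IsLindelof s) :
    IsLindelof (f ⁻¹' s) := by
  intro l _ _ hl
  obtain ⟨y, hy, hcl⟩ := hs (f := map f l) (by rwa [← comap_principal, ← map_le_iff_le_comap] at hl)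
  obtain ⟨x, rfl, hx⟩ := hf.clusterPt_of_mapClusterPt hcl
  exact ⟨x, hy, hx⟩

theorem eventually_clusterPt_of_hereditarilyLindelof {X : Type u} [TopologicalSpace X]
    [HereditarilyLindelofSpace X] (l : Filter X) [CountableInterFilter l] :
    ∀ᶠ x in l, ClusterPt x l := by
  have hs := HereditarilyLindelofSpace.isLindelof {x | ¬ ClusterPt x l}
  filter_upwards [hs.compl_mem_sets fun x hx => by
    rw [mem_ofPred_eq, clusterPt_iff_not_disjoint, not_not, disjoint_iff] at hx
    rw [hx]
    trivial] with x hx using not_not.1 hx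

end Filters

section Alster

/-- A set `Z` has the Alster property if every family of `Gδ` sets which contains each compact
subset of `Z` in one of its members has a countable subfamily covering `Z`. It is encoded, in the
style of `IsLindelof`, through the filters with the countable intersection property. -/
def IsAlster {X : Type*} [TopologicalSpace X] (Z : Set X) : Prop :=
  ∀ ⦃l : Filter X⦄ [NeBot l] [CountableInterFilter l], l ≤ 𝓟 Z →
    ∃ l' ≤ l, NeBot l' ∧ CountableInterFilter l' ∧ ∃ C ⊆ Z, IsCompact C ∧ l' ≤ 𝓝ˢ C

theorem IsAlster.exists_le_tendsto {X Y : Type*} [TopologicalSpace X] {Z : Set X}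
    (hZ : IsAlster Z) {f : Y → X} {l : Filter Y} [NeBot l] [CountableInterFilter l]
    (hl : Tendsto f l (𝓟 Z)) :
    ∃ l' ≤ l, NeBot l' ∧ CountableInterFilter l' ∧
      ∃ C ⊆ Z, IsCompact C ∧ Tendsto f l' (𝓝ˢ C) := by
  obtain ⟨m, hm, hm_ne, hm_cif, C, hCZ, hC, hmC⟩ := hZ (l := map f l) hl
  exact ⟨l ⊓ comap f m, inf_le_left, neBot_inf_comap_iff_map.2 (by rwa [inf_eq_right.2 hm]),
    inferInstance, C, hCZ, hC, (tendsto_comap.mono_left inf_le_right).mono_right hmC⟩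

theorem IsAlster.exists_antitone_tendsto {Y : Type*} {X : ℕ → Type*}
    [∀ i, TopologicalSpace (X i)] {Z : ∀ i, Set (X i)} (hZ : ∀ i, IsAlster (Z i))
    {f : ∀ i, Y → X i} {l : Filter Y} [NeBot l] [CountableInterFilter l]
    (hl : ∀ i, Tendsto (f i) l (𝓟 (Z i))) :
    ∃ m : ℕ → Filter Y, Antitone m ∧ (∀ n, NeBot (m n)) ∧ m 0 ≤ l ∧
      ∀ n, ∃ C ⊆ Z n, IsCompact C ∧ Tendsto (f n) (m (n + 1)) (𝓝ˢ C) := by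
  let S := {m : Filter Y // NeBot m ∧ CountableInterFilter m ∧ m ≤ l}
  have step (n : ℕ) (m : S) : ∃ m' : S, m'.1 ≤ m.1 ∧
      ∃ C ⊆ Z n, IsCompact C ∧ Tendsto (f n) m'.1 (𝓝ˢ C) := by
    obtain ⟨m, _, _, hm⟩ := m
    obtain ⟨m', hle, hne, hcif, hC⟩ := (hZ n).exists_le_tendsto ((hl n).mono_left hm)
    exact ⟨⟨m', hne, hcif, hle.trans hm⟩, hle, hC⟩
  choose next hnext_le hnext using step
  let m (n : ℕ) : S := n.rec ⟨l, ‹_›, ‹_›, le_rfl⟩ next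
  exact ⟨fun n => (m n).1, antitone_nat_of_succ_le fun n => hnext_le n (m n),
    fun n => (m n).2.1, le_rfl, fun n => hnext n (m n)⟩

theorem exists_le_nhds_of_le_nhdsSet {X : Type*} [TopologicalSpace X] {C : Set X}
    (hC : IsCompact C) {𝓾 : Ultrafilter X} (h : (𝓾 : Filter X) ≤ 𝓝ˢ C) :
    ∃ x ∈ C, (𝓾 : Filter X) ≤ 𝓝 x := by
  by_contra! hx
  refine 𝓾.neBot.ne (disjoint_self.1 (Disjoint.mono_left h (hC.disjoint_nhdsSet_left.2 ?_)))
  exact fun x hxC => 𝓾.disjoint_iff_not_le.2 (hx x hxC) |>.symm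

theorem isLindelof_univ_pi_of_isAlster {X : ℕ → Type*} [∀ i, TopologicalSpace (X i)]
    {Z : ∀ i, Set (X i)} (hZ : ∀ i, IsAlster (Z i)) : IsLindelof (univ.pi Z) := by
  intro l _ _ hl
  obtain ⟨m, hm, hm_ne, hml, hC⟩ := IsAlster.exists_antitone_tendsto hZ (f := eval)
    fun i => tendsto_principal.2 (mem_of_superset (le_principal_iff.1 hl) fun x hx => hx i trivial)
  choose C hCZ hC hmC using hC
  have : NeBot (⨅ n, m n) := iInf_neBot_of_directed' hm.directed_ge hm_ne
  let 𝓾 := Ultrafilter.of (⨅ n, m n)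
  have h𝓾 (n : ℕ) : (𝓾 : Filter _) ≤ m n := (Ultrafilter.of_le _).trans (iInf_le m n)
  have hlim (i : ℕ) : ∃ x ∈ C i, Tendsto (eval i) 𝓾 (𝓝 x) :=
    exists_le_nhds_of_le_nhdsSet (𝓾 := 𝓾.map (eval i)) (hC i) ((hmC i).mono_left (h𝓾 (i + 1)))
  choose x hxC hx using hlim
  exact ⟨x, fun i _ => hCZ i (hxC i),
    clusterPt_iff_ultrafilter.2 ⟨𝓾, (h𝓾 0).trans hml, tendsto_pi_nhds.2 hx⟩⟩

end Alster

section MichaelSpace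

variable {K : Type u} [TopologicalSpace K]

/-- The space `K` with the points of `A` made isolated and the neighborhoods of all other points
unchanged; for `K = ℝ` and `A` the irrationals this is the Michael line. The topology is induced
from `K` and the indicator functions of the points of `A`, which makes regularity evident. -/
@[ext]
structure MichaelSpace (A : Set K) : Type u where
  toBase : K

namespace MichaelSpace

variable {A : Set K}

open Classical in
/-- The embedding whose induced topology is the one of the Michael space. -/
noncomputable def embed (y : MichaelSpace A) : K × (A → Bool) :=
  (toBase y, fun a => decide (toBase y = a))

noncomputable instance : TopologicalSpace (MichaelSpace A) :=
  TopologicalSpace.induced embed inferInstance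

theorem continuous_embed : Continuous (embed (A := A)) := continuous_induced_dom

theorem continuous_toBase : Continuous (toBase (A := A)) := continuous_fst.comp continuous_embed

instance [T3Space K] : T3Space (MichaelSpace A) :=
  have : RegularSpace (MichaelSpace A) := regularSpace_induced _
  have : T0Space (MichaelSpace A) :=
    t0Space_of_injective_of_continuous (fun _ _ => MichaelSpace.ext) continuous_toBase
  {}

theorem isOpen_singleton {a : MichaelSpace A} (ha : toBase a ∈ A) : IsOpen {a} := by
  convert (isOpen_discrete {true}).preimage
    ((continuous_apply (⟨toBase a, ha⟩ : A)).comp (continuous_snd.comp continuous_embed))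
  ext y
  simp [embed, MichaelSpace.ext_iff]

theorem nhds_eq_comap [T1Space K] {d : MichaelSpace A} (hd : toBase d ∉ A) :
    𝓝 d = comap toBase (𝓝 (toBase d)) := by
  refine le_antisymm continuous_toBase.continuousAt.tendsto.le_comap ?_
  rw [nhds_induced, ← tendsto_iff_comap, nhds_prod_eq]
  refine tendsto_comap.prodMk (tendsto_pi_nhds.2 fun a => ?_)
  have hda : toBase d ≠ a := fun h => hd (h ▸ a.2)
  refine tendsto_const_nhds.congr' ?_
  filter_upwards [tendsto_comap.eventually (eventually_ne_nhds hda)] with y hy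
  simp [embed, hda, hy]

end MichaelSpace

theorem isLindelof_preimage_of_lindelofSpace_prod {Y : Type*} [TopologicalSpace Y] [T2Space K]
    {Z : Set K} [LindelofSpace (Z × Y)] {f : Y → K} (hf : Continuous f) :
    IsLindelof (f ⁻¹' Z) := by
  have hclosed : IsClosed {w : Z × Y | (w.1 : K) = f w.2} :=
    isClosed_eq (by fun_prop) (by fun_prop)
  convert hclosed.isLindelof.image continuous_snd
  ext y
  simp

theorem countable_of_lindelofSpace_prod {Y : Type*} [TopologicalSpace Y] [T2Space K]
    {Z : Set K} [LindelofSpace (Z × Y)] {f : Y → K} (hf : Continuous f)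
    (hopen : ∀ y, f y ∈ Z → IsOpen {y}) : (f ⁻¹' Z).Countable := by
  refine (isLindelof_preimage_of_lindelofSpace_prod hf).countable_of_isDiscrete ?_
  exact isDiscrete_iff_forall_mem_exists_isOpen.2 fun y hy =>
    ⟨{y}, hopen y hy, singleton_inter_of_mem hy⟩

theorem not_isLindelof_michaelSpace [T3Space K] {Z A D : Set K}
    (hZ : ProductivelyQuasiLindelofSp Z) (hAZ : A ⊆ Z) (hA : ¬ A.Countable) (hD : Disjoint D Z) :
    ¬ IsLindelof (MichaelSpace.toBase (A := A) ⁻¹' (A ∪ D)) := by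
  intro h
  let Y : Set (MichaelSpace A) := MichaelSpace.toBase ⁻¹' (A ∪ D)
  have : LindelofSpace (Z × Y) := quasiLindelofSp_iff_lindelofSpace.1 <| hZ Y
    ⟨inferInstance, inferInstance,
      quasiLindelofSp_iff_lindelofSpace.2 (isLindelof_iff_lindelofSpace.1 h)⟩
  have hmem (y : Y) : MichaelSpace.toBase y.1 ∈ Z ↔ MichaelSpace.toBase y.1 ∈ A :=
    ⟨fun hy => y.2.resolve_right fun hd => disjoint_left.1 hD hd hy, fun hy => hAZ hy⟩
  have hf : Continuous fun y : Y => MichaelSpace.toBase y.1 :=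
    MichaelSpace.continuous_toBase.comp continuous_subtype_val
  have hcount := countable_of_lindelofSpace_prod (Z := Z) hf fun y hy => by
    convert (MichaelSpace.isOpen_singleton ((hmem y).1 hy)).preimage continuous_subtype_val
    ext
    simp [Subtype.ext_iff]
  refine hA ((hcount.image fun y : Y => MichaelSpace.toBase y.1).mono fun a ha => ?_)
  exact ⟨⟨⟨a⟩, Or.inl ha⟩, hAZ ha, rfl⟩

theorem exists_filter_forall_not_clusterPt [T3Space K] {Z A D : Set K}
    (hZ : ProductivelyQuasiLindelofSp Z) (hAZ : A ⊆ Z) (hA : ¬ A.Countable) (hD : Disjoint D Z) :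
    ∃ l : Filter K, NeBot l ∧ CountableInterFilter l ∧ A ∪ D ∈ l ∧ (∀ a ∈ A, {a}ᶜ ∈ l) ∧
      ∀ d ∈ D, ¬ ClusterPt d l := by
  have h := not_isLindelof_michaelSpace hZ hAZ hA hD
  unfold IsLindelof at h
  push Not at h
  obtain ⟨l, hl_ne, hl_cif, hl, hcl⟩ := h
  refine ⟨map MichaelSpace.toBase l, inferInstance, inferInstance, by simpa using hl,
    fun a ha => ?_, fun d hd hdl => ?_⟩
  · refine mem_map.2 (mem_of_superset (?_ : {(⟨a⟩ : MichaelSpace A)}ᶜ ∈ l) fun y hy h => ?_)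
    · have hal := hcl ⟨a⟩ (Or.inl ha)
      rwa [clusterPt_iff_not_disjoint, not_not,
        (isOpen_singleton_iff_nhds_eq_pure _).1 (MichaelSpace.isOpen_singleton ha),
        ← principal_singleton, disjoint_principal_left] at hal
    · exact hy (MichaelSpace.ext h)
  · have hdA : d ∉ A := fun h => disjoint_left.1 hD hd (hAZ h)
    refine hcl ⟨d⟩ (Or.inr hd) ?_
    rw [ClusterPt, MichaelSpace.nhds_eq_comap hdA, inf_comm]
    exact neBot_inf_comap_iff_map.2 (by rwa [inf_comm])

end MichaelSpace

section OmegaOne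

/-- A linear order is of type `ω₁` if it is well-founded and uncountable but all its initial
segments are countable. -/
class IsOmegaOne (ι : Type u) [LinearOrder ι] : Prop extends WellFoundedLT ι, Uncountable ι where
  countable_Iio (a : ι) : Countable (Iio a)

attribute [instance] IsOmegaOne.countable_Iio

instance : IsOmegaOne (aleph 1 : Cardinal.{u}).ord.ToType where
  wf := wellFounded_lt
  not_countable h := by
    rw [← mk_le_aleph0_iff, mk_ord_toType] at h
    exact absurd aleph0_lt_aleph_one h.not_gt
  countable_Iio a := by
    rw [← mk_le_aleph0_iff, ← lt_aleph_one_iff]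
    exact (mk_Iio_lt a (by simp)).trans_eq (mk_ord_toType _)

variable {ι : Type u} [LinearOrder ι] [IsOmegaOne ι]

theorem countable_Iic (a : ι) : (Iic a).Countable := by
  rw [← Iio_insert]
  exact (to_countable (Iio a)).insert a

theorem mk_le_aleph_one_of_isOmegaOne : #ι ≤ ℵ₁ := by
  by_contra! h
  have hlt : (ℵ₁ : Cardinal.{u}).ord < Ordinal.type (· < · : ι → ι → Prop) :=
    (ord_lt_ord.2 h).trans_le (ord_le_type _)
  have : IsWellOrder ι (· < ·) := { }
  let a := Ordinal.enum (· < ·) ⟨_, hlt⟩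
  have hcard : #(Iio a) = ℵ₁ := by
    rw [← card_ord ℵ₁, ← Ordinal.typein_enum (· < ·) hlt]
    rfl
  exact absurd (lt_aleph_one_iff.2 (mk_le_aleph0_iff.2 (IsOmegaOne.countable_Iio a))) hcard.not_lt

instance : CountableInterFilter (atTop : Filter ι) where
  countable_sInter_mem S hS h := by
    have hb (s : Set ι) (hs : s ∈ S) : ∃ a, Ici a ⊆ s := mem_atTop_sets.1 (h s hs)
    choose! b hb using hb
    obtain ⟨a, ha⟩ : ∃ a, a ∉ ⋃ s ∈ S, Iic (b s) := by
      by_contra! h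
      exact not_countable_univ ((hS.biUnion fun s _ => countable_Iic (b s)).mono fun a _ => h a)
    simp only [mem_iUnion, mem_Iic, not_exists, not_le] at ha
    exact mem_of_superset (mem_atTop a) fun c hc s hs => hb s hs ((ha s hs).le.trans hc)

instance : NoMaxOrder ι where
  exists_gt a := by
    by_contra! h
    exact not_countable_univ ((countable_Iic a).mono fun b _ => h b)

theorem exists_frequently_eq_of_regressive {β : Type*} {s : ι → Set β} (hs : Monotone s)
    (hcount : ∀ γ, (s γ).Countable) {f : ι → β}
    (hf : ∀ δ, Order.IsSuccLimit δ → ∃ γ < δ, f δ ∈ s γ) : ∃ b, ∃ᶠ δ in atTop, f δ = b := by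
  by_contra hne
  rw [not_exists] at hne
  have hbound (γ : ι) : ∃ γ' > γ, ∀ δ ≥ γ', ∀ b ∈ s γ, f δ ≠ b := by
    have hev := (eventually_countable_ball (hcount γ)).2 fun b _ => not_frequently.1 (hne b)
    obtain ⟨γ', hγ'⟩ := eventually_atTop.1 (hev.and (eventually_gt_atTop γ))
    exact ⟨γ', (hγ' γ' le_rfl).2, fun δ hδ => (hγ' δ hδ).1⟩
  choose g hg hfg using hbound
  -- At the supremum of the iterates of `g`, a regressive `f` has no admissible value left.
  let a (n : ℕ) : ι := g^[n] (Classical.arbitrary ι)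
  have ha_succ (n : ℕ) : a (n + 1) = g (a n) := iterate_succ_apply' g n _
  have ha : StrictMono a := strictMono_nat_of_lt_succ fun n => (hg _).trans_eq (ha_succ n).symm
  obtain ⟨δ, hδ⟩ : ∃ δ, IsLUB (range a) δ := by
    have hbdd : (upperBounds (range a)).Nonempty := by
      obtain ⟨δ, hδ⟩ := (eventually_countable_forall.2 fun n => eventually_ge_atTop (a n)).exists
      exact ⟨δ, forall_mem_range.2 hδ⟩
    obtain ⟨δ, hδ, hmin⟩ := (wellFounded_lt (α := ι)).has_min _ hbdd
    exact ⟨δ, hδ, fun b hb => not_lt.1 (hmin b hb)⟩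
  have hlim : Order.IsSuccLimit δ := hδ.isSuccLimit_of_notMem (range_nonempty a) (by
    rintro ⟨n, rfl⟩
    exact (ha n.lt_succ_self).not_ge (hδ.1 (mem_range_self _)))
  obtain ⟨γ, hγ, hfγ⟩ := hf δ hlim
  obtain ⟨_, ⟨n, rfl⟩, hn⟩ := (lt_isLUB_iff hδ).1 hγ
  exact hfg (a n) δ (ha_succ n ▸ hδ.1 (mem_range_self _)) _ (hs hn.le hfγ) rfl

end OmegaOne

section Luzin

theorem exists_uncountable_forall_countable_inter {α : Type u} {𝓔 : Set (Set α)} {Z : Set α}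
    (h𝓔 : #𝓔 ≤ ℵ₁) (hcover : Z ⊆ ⋃₀ 𝓔) (hZ : ∀ 𝓔' ⊆ 𝓔, 𝓔'.Countable → ¬ Z ⊆ ⋃₀ 𝓔') :
    ∃ A ⊆ Z, ¬ A.Countable ∧ ∀ E ∈ 𝓔, (A ∩ E).Countable := by
  let ι := (ℵ₁ : Cardinal.{u}).ord.ToType
  obtain ⟨e⟩ : Nonempty (𝓔 ↪ ι) := by rwa [← Cardinal.le_def, mk_ord_toType]
  -- As for a Luzin set, the `a`-th point avoids all members of `𝓔` enumerated before `a`.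
  have hx (a : ι) : ∃ x ∈ Z, ∀ E : 𝓔, x ∈ E.1 → a ≤ e E := by
    obtain ⟨x, hxZ, hx⟩ := not_subset.1 <| hZ ((↑) '' (e ⁻¹' Iio a)) (by simp)
      (((to_countable (Iio a)).preimage e.injective).image _)
    exact ⟨x, hxZ, fun E hxE => not_lt.1 fun hlt => hx ⟨E, mem_image_of_mem _ hlt, hxE⟩⟩
  choose x hxZ hx using hx
  refine ⟨range x, range_subset_iff.2 hxZ, fun hcount => ?_, fun E hE => ?_⟩
  · have hfib (a : ι) : (x ⁻¹' {x a}).Countable := by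
      obtain ⟨E, hE, hxE⟩ := hcover (hxZ a)
      exact (countable_Iic (e ⟨E, hE⟩)).mono fun b (hb : x b = x a) => hx b ⟨E, hE⟩ (hb ▸ hxE)
    refine not_countable_univ (α := ι) ((hcount.biUnion (t := fun y _ => x ⁻¹' {y}) ?_).mono ?_)
    · exact forall_mem_range.2 hfib
    · exact fun a _ => mem_biUnion (mem_range_self a) rfl
  · refine ((countable_Iic (e ⟨E, hE⟩)).image x).mono ?_
    rintro _ ⟨⟨a, rfl⟩, ha⟩
    exact mem_image_of_mem x (hx a ⟨E, hE⟩ ha)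

end Luzin

section SecondCountable

variable {K : Type u} [TopologicalSpace K] [SecondCountableTopology K]

theorem mk_setOf_isClosed_le_continuum : #{s : Set K | IsClosed s} ≤ 𝔠 := by
  let _ := borel K
  have : BorelSpace K := ⟨rfl⟩
  have hcount := TopologicalSpace.countable_countableBasis K
  refine (mk_le_mk_of_subset fun s (hs : IsClosed s) => ?_).trans
    (MeasurableSpace.cardinal_measurableSet_le_continuum
      ((mk_le_aleph0_iff.2 hcount.to_subtype).trans aleph0_le_continuum))
  rw [mem_ofPred_eq, ← (TopologicalSpace.isBasis_countableBasis K).borel_eq_generateFrom]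
  exact hs.measurableSet

theorem isSigmaCompact_of_productivelyQuasiLindelofSp [CompactSpace K] [T2Space K]
    (hCH : 𝔠 = (ℵ₁ : Cardinal.{u})) {Z : Set K} (hZ : ProductivelyQuasiLindelofSp Z) :
    IsSigmaCompact Z := by
  by_contra hσ
  let 𝓔 := {C : Set K | IsClosed C ∧ C ⊆ Z}
  obtain ⟨A, hAZ, hA, hA𝓔⟩ := exists_uncountable_forall_countable_inter (𝓔 := 𝓔) (Z := Z)
    (((mk_le_mk_of_subset fun _ h => h.1).trans mk_setOf_isClosed_le_continuum).trans_eq hCH)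
    (fun z hz => ⟨{z}, ⟨isClosed_singleton, singleton_subset_iff.2 hz⟩, rfl⟩)
    (fun 𝓔' h𝓔' hcount hcover => hσ <|
      (subset_antisymm hcover (sUnion_subset fun C hC => (h𝓔' hC).2)) ▸
        isSigmaCompact_sUnion_of_isCompact hcount fun C hC => (h𝓔' hC).1.isCompact)
  obtain ⟨l, _, _, hl, hlA, hcl⟩ :=
    exists_filter_forall_not_clusterPt (D := Zᶜ) hZ hAZ hA disjoint_compl_left
  have hclZ : {x | ClusterPt x l} ⊆ Z := fun x hx => not_not.1 fun hxZ => hcl x hxZ hx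
  have hcount : (A ∩ {x | ClusterPt x l}).Countable := hA𝓔 _ ⟨isClosed_setOfPred_clusterPt, hclZ⟩
  obtain ⟨x, hxcl, hxA, hx⟩ := ((eventually_clusterPt_of_hereditarilyLindelof l).and
    (.and hl ((eventually_countable_ball hcount).2 fun a ha => hlA a ha.1))).exists
  exact hx x ⟨hxA.resolve_right (not_not.2 (hclZ hxcl)), hxcl⟩ rfl

end SecondCountable

theorem exists_isOpen_inter_closure_subset_of_isSigmaCompact {K : Type*} [TopologicalSpace K]
    [LocallyCompactSpace K] [T2Space K] {G T : Set K} (hG : IsGδ G) (hne : G.Nonempty)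
    (hT : IsSigmaCompact T) (hGT : G ⊆ T) :
    ∃ U, IsOpen U ∧ (U ∩ G).Nonempty ∧ closure (U ∩ G) ⊆ T := by
  obtain ⟨C, hC, rfl⟩ := hT
  have : BaireSpace G := hG.baireSpace_of_t2Space_locallyCompactSpace
  have : Nonempty G := hne.to_subtype
  obtain ⟨n, x, hx⟩ := nonempty_interior_of_iUnion_of_closed (f := fun n => ((↑) ⁻¹' C n : Set G))
    (fun n => (hC n).isClosed.preimage continuous_subtype_val)
    (by rw [← preimage_iUnion, eq_univ_iff_forall]; exact fun x => hGT x.2)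
  obtain ⟨V, hVC, hV, hxV⟩ := mem_interior.1 hx
  obtain ⟨U, hU, rfl⟩ := isOpen_induced_iff.1 hV
  refine ⟨U, hU, ⟨x, hxV, x.2⟩, ?_⟩
  exact (closure_minimal (fun y hy => hVC (a := ⟨y, hy.2⟩) hy.1) (hC n).isClosed).trans
    (subset_iUnion C n)

namespace ProductivelyQuasiLindelofSp

theorem of_continuous_surjective {X Y : Type u} [TopologicalSpace X] [TopologicalSpace Y]
    (hX : ProductivelyQuasiLindelofSp X) {f : X → Y} (hf : Continuous f) (hsurj : Surjective f) :
    ProductivelyQuasiLindelofSp Y := by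
  intro W _ hW
  have := quasiLindelofSp_iff_lindelofSpace.1 (hX W hW)
  exact quasiLindelofSp_iff_lindelofSpace.2 <|
    .of_continuous_surjective (hf.prodMap continuous_id) (hsurj.prodMap surjective_id)

theorem image {X Y : Type u} [TopologicalSpace X] [TopologicalSpace Y] {Z : Set X}
    (hZ : ProductivelyQuasiLindelofSp Z) {f : X → Y} (hf : Continuous f) :
    ProductivelyQuasiLindelofSp (f '' Z) :=
  hZ.of_continuous_surjective (hf.restrict (mapsTo_image f Z))
    (surjective_mapsTo_image_restrict f Z)

theorem isLindelof {X : Type u} [TopologicalSpace X] {Z : Set X}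
    (hZ : ProductivelyQuasiLindelofSp Z) : IsLindelof Z := by
  have := quasiLindelofSp_iff_lindelofSpace.1 <| hZ PUnit
    ⟨inferInstance, inferInstance, quasiLindelofSp_iff_lindelofSpace.2 inferInstance⟩
  exact isLindelof_iff_lindelofSpace.2 <|
    .of_continuous_surjective (continuous_fst (X := Z) (Y := PUnit)) Prod.fst_surjective

end ProductivelyQuasiLindelofSp

section Cube

variable {ι : Type u} [LinearOrder ι]

/-- The set of points of the Cantor cube which agree below `ε` with some point of `s`. -/
def saturation (ε : ι) (s : Set (ι → Bool)) : Set (ι → Bool) :=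
  (Iio ε).domRestrict ⁻¹' ((Iio ε).domRestrict '' s)

/-- The closed subsets of the Cantor cube which depend only on the coordinates below `ε`. -/
def IsClosedBelow (ε : ι) (F : Set (ι → Bool)) : Prop :=
  ∃ C : Set (Iio ε → Bool), IsClosed C ∧ (Iio ε).domRestrict ⁻¹' C = F

/-- The basic clopen subset of the Cantor cube given by the conditions `y a = b` for
`(a, b) ∈ p`. -/
def cylinder (p : Finset (ι × Bool)) : Set (ι → Bool) :=
  {y | ∀ q ∈ p, y q.1 = q.2}

theorem continuous_domRestrict (ε : ι) :
    Continuous ((Iio ε).domRestrict : (ι → Bool) → Iio ε → Bool) :=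
  Pi.continuous_domRestrict _

theorem subset_saturation (ε : ι) (s : Set (ι → Bool)) : s ⊆ saturation ε s :=
  subset_preimage_image _ s

theorem mem_saturation {ε : ι} {s : Set (ι → Bool)} {y : ι → Bool} :
    y ∈ saturation ε s ↔ ∃ z ∈ s, ∀ a < ε, z a = y a := by
  simp [saturation, funext_iff]

theorem saturation_antitone (s : Set (ι → Bool)) : Antitone fun ε => saturation ε s := by
  intro ε ε' h y hy
  obtain ⟨z, hz, hzy⟩ := mem_saturation.1 hy
  exact mem_saturation.2 ⟨z, hz, fun a ha => hzy a (ha.trans_le h)⟩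

theorem isClosedBelow_saturation (ε : ι) {s : Set (ι → Bool)} (hs : IsCompact s) :
    IsClosedBelow ε (saturation ε s) :=
  ⟨_, (hs.image (continuous_domRestrict ε)).isClosed, rfl⟩

namespace IsClosedBelow

variable {ε ε' : ι} {F : Set (ι → Bool)}

protected theorem isClosed (hF : IsClosedBelow ε F) : IsClosed F := by
  obtain ⟨C, hC, rfl⟩ := hF
  exact hC.preimage (continuous_domRestrict ε)

theorem mono (hF : IsClosedBelow ε F) (h : ε ≤ ε') : IsClosedBelow ε' F := by
  obtain ⟨C, hC, rfl⟩ := hF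
  exact ⟨(fun y a => y (inclusion (Iio_subset_Iio h) a)) ⁻¹' C, hC.preimage (by fun_prop), rfl⟩

end IsClosedBelow

theorem exists_cylinder_subset_preimage {ε : ι} {U : Set (Iio ε → Bool)} (hU : IsOpen U)
    {y : ι → Bool} (hy : (Iio ε).domRestrict y ∈ U) :
    ∃ p : Finset (ι × Bool), (∀ q ∈ p, q.1 < ε) ∧ y ∈ cylinder p ∧
      cylinder p ⊆ (Iio ε).domRestrict ⁻¹' U := by
  classical
  obtain ⟨s, V, hV, hVU⟩ := isOpen_pi_iff.1 hU _ hy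
  let p : Finset (ι × Bool) := s.image fun a : Iio ε => (a.1, y a)
  refine ⟨p, ?_, ?_, fun z hz => hVU fun a ha => ?_⟩
  · exact Finset.forall_mem_image.2 fun a _ => a.2
  · exact Finset.forall_mem_image.2 fun a _ => rfl
  have hza : z a = y a := by simpa using hz (a.1, y a) (Finset.mem_image_of_mem _ ha)
  simpa [hza] using (hV a ha).2

theorem countable_setOf_forall_fst_lt [IsOmegaOne ι] (γ : ι) :
    {p : Finset (ι × Bool) | ∀ q ∈ p, q.1 < γ}.Countable := by
  have h : (Iio γ ×ˢ (univ : Set Bool)).Countable := (to_countable _).prod countable_univ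
  refine ((countable_ofPred_finite_subset h).preimage Finset.coe_injective).mono fun p hp => ?_
  exact ⟨p.finite_toSet, fun q hq => ⟨hp q hq, trivial⟩⟩

theorem exists_lt_forall_fst_lt {δ : ι} (hδ : Order.IsSuccLimit δ) {p : Finset (ι × Bool)}
    (hp : ∀ q ∈ p, q.1 < δ) : ∃ γ < δ, ∀ q ∈ p, q.1 < γ := by
  obtain ⟨a, ha⟩ := not_isMin_iff.1 hδ.not_isMin
  let s := insert a (p.image Prod.fst)
  have hs : s.Nonempty := Finset.insert_nonempty _ _
  have hmax : s.max' hs < δ := (s.max'_lt_iff hs).2 (by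
    simpa only [s, Finset.forall_mem_insert, Finset.forall_mem_image] using ⟨ha, hp⟩)
  obtain ⟨γ, hγ, hγδ⟩ := hδ.lt_iff_exists_lt.1 hmax
  exact ⟨γ, hγ, fun q hq => hγδ.trans_le' <|
    s.le_max' _ (Finset.mem_insert_of_mem (Finset.mem_image_of_mem _ hq))⟩

theorem exists_frequently_eq_of_forall_fst_lt [IsOmegaOne ι] {p : ι → Finset (ι × Bool)}
    (hp : ∀ ε, ∀ q ∈ p ε, q.1 < ε) : ∃ p₀, ∃ᶠ ε in atTop, p ε = p₀ :=
  exists_frequently_eq_of_regressive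
    (s := fun γ => {p : Finset (ι × Bool) | ∀ q ∈ p, q.1 < γ})
    (fun _ _ h _ hp q hq => (hp q hq).trans_le h) countable_setOf_forall_fst_lt
    fun δ hδ => exists_lt_forall_fst_lt hδ (hp δ)

theorem iInter_saturation_subset_of_isLindelof [IsOmegaOne ι] {Z : Set (ι → Bool)}
    (hZ : IsLindelof Z) : ⋂ γ, saturation γ Z ⊆ Z := by
  intro y hy
  by_contra hyZ
  obtain ⟨T, hT, hcover⟩ := hZ.elim_countable_subcover (fun a => {z | z a ≠ y a})
    (fun a => isOpen_ne.preimage (continuous_apply a))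
    (fun z hz => mem_iUnion.2 (ne_iff.1 fun h => hyZ (h ▸ hz)))
  obtain ⟨γ, hγ⟩ := ((eventually_countable_ball hT).2 fun a _ => eventually_gt_atTop a).exists
  obtain ⟨z, hz, hzy⟩ := mem_saturation.1 (mem_iInter.1 hy γ)
  obtain ⟨a, ha, hza⟩ := mem_iUnion₂.1 (hcover hz)
  exact hza (hzy a (hγ a ha))

theorem eventually_subset_of_iInter_subset {κ K : Type*} [LinearOrder κ] [Nonempty κ]
    [TopologicalSpace K] [CompactSpace K] {Q : κ → Set K}
    (hQ : Antitone Q) (hclosed : ∀ ε, IsClosed (Q ε)) {O : Set K} (hO : IsOpen O)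
    (hQO : ⋂ ε, Q ε ⊆ O) : ∀ᶠ ε in atTop, Q ε ⊆ O := by
  obtain ⟨ε₀, hε₀⟩ := exists_subset_nhds_of_isCompact' hQ.directed_ge
    (fun ε => (hclosed ε).isCompact) hclosed fun x hx => hO.mem_nhds (hQO hx)
  filter_upwards [eventually_ge_atTop ε₀] with ε hε using (hQ hε).trans hε₀

theorem eventually_subset_saturation_iInter [IsOmegaOne ι] {Q : ι → Set (ι → Bool)}
    (hQ : Antitone Q) (hclosed : ∀ ε, IsClosed (Q ε)) (γ : ι) :
    ∀ᶠ ε in atTop, Q ε ⊆ saturation γ (⋂ ε, Q ε) := by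
  have hcompact : IsCompact (⋂ ε, Q ε) := (isClosed_iInter hclosed).isCompact
  have hGδ : IsGδ ((Iio γ).domRestrict '' ⋂ ε, Q ε) :=
    (hcompact.image (continuous_domRestrict γ)).isClosed.isGδ
  obtain ⟨O, hO, hOeq⟩ := isGδ_iff_eq_iInter_nat.1 hGδ
  have hsub (n : ℕ) : ∀ᶠ ε in atTop, Q ε ⊆ (Iio γ).domRestrict ⁻¹' O n :=
    eventually_subset_of_iInter_subset hQ hclosed ((hO n).preimage (continuous_domRestrict γ))
      (image_subset_iff.1 (hOeq ▸ iInter_subset O n))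
  filter_upwards [eventually_countable_forall.2 hsub] with ε hε
  rw [saturation, hOeq, preimage_iInter]
  exact subset_iInter hε

theorem bind_principal_saturation_le_nhdsSet [IsOmegaOne ι] {C : Set (ι → Bool)}
    (hC : IsCompact C) : atTop.bind (fun γ => 𝓟 (saturation γ C)) ≤ 𝓝ˢ C := by
  refine (hasBasis_nhdsSet C).ge_iff.2 fun O ⟨hO, hCO⟩ => mem_bind'.2 ?_
  exact eventually_subset_of_iInter_subset (saturation_antitone C)
    (fun γ => (isClosedBelow_saturation γ hC).isClosed) hO
    ((iInter_saturation_subset_of_isLindelof hC.isLindelof).trans hCO)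

end Cube

section Filtration

variable {ι : Type u} [LinearOrder ι]

/-- An increasing sequence of countable families of closed subsets of the Cantor cube, such that
the members of the `ξ`-th family depend only on the coordinates below `ξ`. -/
structure IsClosedFiltration (𝓕 : ι → Set (Set (ι → Bool))) : Prop where
  monotone : Monotone 𝓕
  countable : ∀ ξ, (𝓕 ξ).Countable
  isClosedBelow : ∀ ξ, ∀ F ∈ 𝓕 ξ, IsClosedBelow ξ F

theorem IsClosedFiltration.saturation_subset {𝓕 : ι → Set (Set (ι → Bool))}
    (h𝓕 : IsClosedFiltration 𝓕) {ξ : ι} {M Z : Set (ι → Bool)}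
    (hM : M ⊆ saturation ξ Z ∪ ⋃₀ 𝓕 ξ) : saturation ξ M ⊆ saturation ξ Z ∪ ⋃₀ 𝓕 ξ := by
  rintro x ⟨y, hy, hyx⟩
  rcases hM hy with ⟨z, hz, hzy⟩ | ⟨F, hF, hyF⟩
  · exact Or.inl ⟨z, hz, hzy.trans hyx⟩
  · refine Or.inr ⟨F, hF, ?_⟩
    obtain ⟨C, -, rfl⟩ := h𝓕.isClosedBelow ξ F hF
    exact mem_of_eq_of_mem (s := C) hyx.symm hyF

variable [IsOmegaOne ι]

theorem exists_isClosedFiltration {𝓢 : Set (Set (ι → Bool))} (h𝓢 : #𝓢 ≤ ℵ₁)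
    (hclosed : ∀ F ∈ 𝓢, ∃ ξ, IsClosedBelow ξ F) :
    ∃ 𝓕 : ι → Set (Set (ι → Bool)), IsClosedFiltration 𝓕 ∧ (∀ ξ, 𝓕 ξ ⊆ 𝓢) ∧
      ∀ F ∈ 𝓢, ∀ᶠ ξ in atTop, F ∈ 𝓕 ξ := by
  obtain ⟨e⟩ : Nonempty (𝓢 ↪ ι) :=
    (Cardinal.le_def _ _).1 (h𝓢.trans (aleph_one_le_iff.2 (aleph0_lt_mk_iff.2 inferInstance)))
  refine ⟨fun ξ => (↑) '' {F : 𝓢 | e F < ξ ∧ IsClosedBelow ξ F.1}, ⟨fun ξ η h => ?_, fun ξ => ?_,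
    fun ξ => ?_⟩, fun ξ => by simp, fun F hF => ?_⟩
  · exact image_mono fun F hF => ⟨hF.1.trans_le h, hF.2.mono h⟩
  · exact (((to_countable (Iio ξ)).preimage e.injective).mono fun F hF => hF.1).image _
  · rintro _ ⟨F, hF, rfl⟩
    exact hF.2
  · obtain ⟨ξ₀, hξ₀⟩ := hclosed F hF
    filter_upwards [eventually_gt_atTop (e ⟨F, hF⟩), eventually_ge_atTop ξ₀] with ξ hξ hle
    exact ⟨⟨F, hF⟩, ⟨hξ, hξ₀.mono hle⟩, rfl⟩

theorem mk_setOf_exists_isClosedBelow_le_aleph_one (hCH : 𝔠 = (ℵ₁ : Cardinal.{u})) :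
    #{F : Set (ι → Bool) | ∃ ξ, IsClosedBelow ξ F} ≤ ℵ₁ := by
  have hlevel (ξ : ι) : #{F : Set (ι → Bool) | IsClosedBelow ξ F} ≤ ℵ₁ :=
    mk_image_le.trans (mk_setOf_isClosed_le_continuum.trans_eq hCH)
  rw [ofPred_exists]
  calc #(⋃ ξ, {F : Set (ι → Bool) | IsClosedBelow ξ F})
      ≤ #ι * ⨆ ξ, #{F : Set (ι → Bool) | IsClosedBelow ξ F} := mk_iUnion_le _
    _ ≤ ℵ₁ * ℵ₁ := mul_le_mul' mk_le_aleph_one_of_isOmegaOne (ciSup_le' hlevel)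
    _ = ℵ₁ := mul_eq_self (aleph0_le_aleph 1)

theorem eventually_mem_saturation_setOf_clusterPt (m : Filter (ι → Bool))
    [CountableInterFilter m] (ε : ι) : ∀ᶠ x in m, x ∈ saturation ε {y | ClusterPt y m} := by
  have h := eventually_clusterPt_of_hereditarilyLindelof (map (Iio ε).domRestrict m)
  filter_upwards [eventually_map.1 h] with x hx
  obtain ⟨y, hyx, hy⟩ := (continuous_domRestrict ε).isProperMap.clusterPt_of_mapClusterPt hx
  exact ⟨y, hy, hyx⟩

theorem exists_cylinder_closure_subset_saturation (hCH : 𝔠 = (ℵ₁ : Cardinal.{u}))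
    {Z : Set (ι → Bool)} (hZ : ProductivelyQuasiLindelofSp Z) {ε : ι} {G : Set (Iio ε → Bool)}
    (hG : IsGδ G) (hne : G.Nonempty) (hGZ : (Iio ε).domRestrict ⁻¹' G ⊆ saturation ε Z) :
    ∃ p : Finset (ι × Bool), (∀ q ∈ p, q.1 < ε) ∧
      (cylinder p ∩ (Iio ε).domRestrict ⁻¹' G).Nonempty ∧
      closure (cylinder p ∩ (Iio ε).domRestrict ⁻¹' G) ⊆ saturation ε Z := by
  have hr := continuous_domRestrict ε
  have hσ : IsSigmaCompact ((Iio ε).domRestrict '' Z) :=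
    isSigmaCompact_of_productivelyQuasiLindelofSp hCH (hZ.image hr)
  have hrsurj : Surjective ((Iio ε).domRestrict : (ι → Bool) → _) :=
    Subtype.val_injective.surjective_comp_right
  obtain ⟨U, hU, ⟨y, hyU, hyG⟩, hcl⟩ := exists_isOpen_inter_closure_subset_of_isSigmaCompact
    hG hne hσ (by rwa [saturation, hrsurj.preimage_subset_preimage_iff] at hGZ)
  obtain ⟨y, rfl⟩ := hrsurj y
  obtain ⟨p, hp, hyp, hpU⟩ := exists_cylinder_subset_preimage hU hyU
  refine ⟨p, hp, ⟨y, hyp, hyG⟩, ?_⟩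
  calc closure (cylinder p ∩ (Iio ε).domRestrict ⁻¹' G)
      ⊆ closure ((Iio ε).domRestrict ⁻¹' (U ∩ G)) := closure_mono (inter_subset_inter_left _ hpU)
    _ ⊆ (Iio ε).domRestrict ⁻¹' closure (U ∩ G) := hr.closure_preimage_subset _
    _ ⊆ saturation ε Z := preimage_mono hcl

namespace IsClosedFiltration

variable {𝓕 : ι → Set (Set (ι → Bool))} {M Z A : Set (ι → Bool)}

theorem exists_isGδ_preimage_eq_saturation_diff (h𝓕 : IsClosedFiltration 𝓕) (hM : IsCompact M)
    (ε : ι) : ∃ G, IsGδ G ∧ (Iio ε).domRestrict ⁻¹' G = saturation ε M \ ⋃₀ 𝓕 ε := by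
  choose! C hC hCF using h𝓕.isClosedBelow ε
  refine ⟨(Iio ε).domRestrict '' M ∩ ⋂ F ∈ 𝓕 ε, (C F)ᶜ, .inter ?_ ?_, ?_⟩
  · exact (hM.image (continuous_domRestrict ε)).isClosed.isGδ
  · exact .biInter_of_isOpen (h𝓕.countable ε) fun F hF => (hC F hF).isOpen_compl
  · rw [preimage_inter, sdiff_eq, saturation, sUnion_eq_biUnion, compl_iUnion₂, preimage_iInter₂]
    congr! 4 with F hF
    rw [preimage_compl, hCF F hF]

theorem exists_isCompact_subset_union (h𝓕 : IsClosedFiltration 𝓕)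
    (hZ : ProductivelyQuasiLindelofSp Z) (hAZ : A ⊆ Z) (hA : ¬ A.Countable)
    (hA𝓕 : ∀ ξ, (A ∩ ⋃₀ 𝓕 ξ).Countable) :
    ∃ M, IsCompact M ∧ (∀ ξ, M ⊆ saturation ξ Z ∪ ⋃₀ 𝓕 ξ) ∧
      ∀ ε, ¬ saturation ε M ⊆ ⋃₀ 𝓕 ε := by
  obtain ⟨m, _, _, hm, hmA, hmD⟩ := exists_filter_forall_not_clusterPt
    (D := ⋃ ξ, (saturation ξ Z ∪ ⋃₀ 𝓕 ξ)ᶜ) hZ hAZ hA <| disjoint_iUnion_left.2 fun ξ =>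
      disjoint_compl_left_iff_subset.2 ((subset_saturation ξ Z).trans subset_union_left)
  have hM (ξ : ι) : {x | ClusterPt x m} ⊆ saturation ξ Z ∪ ⋃₀ 𝓕 ξ :=
    fun x hx => not_not.1 fun hxD => hmD x (mem_iUnion.2 ⟨ξ, hxD⟩) hx
  refine ⟨_, isClosed_setOfPred_clusterPt.isCompact, hM, fun ε hε => ?_⟩
  obtain ⟨x, hxM, hxAD, hxA⟩ := ((eventually_mem_saturation_setOf_clusterPt m ε).and
    (.and hm ((eventually_countable_ball (hA𝓕 ε)).2 fun a ha => hmA a ha.1))).exists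
  have hxD := hxAD.resolve_left fun h => hxA x ⟨h, hε hxM⟩ rfl
  obtain ⟨ξ, hξ⟩ := mem_iUnion.1 hxD
  rcases le_total ξ ε with hle | hle
  · exact hξ (h𝓕.saturation_subset (hM ξ) (saturation_antitone _ hle hxM))
  · exact hξ (Or.inr (sUnion_mono (h𝓕.monotone hle) (hε hxM)))

theorem exists_isCompact_frequently_saturation_notMem (h𝓕 : IsClosedFiltration 𝓕)
    (hCH : 𝔠 = (ℵ₁ : Cardinal.{u})) (hZ : ProductivelyQuasiLindelofSp Z) (hAZ : A ⊆ Z)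
    (hA : ¬ A.Countable) (hA𝓕 : ∀ ξ, (A ∩ ⋃₀ 𝓕 ξ).Countable) :
    ∃ C ⊆ Z, IsCompact C ∧ ∀ γ, ∃ᶠ ξ in atTop, saturation γ C ∉ 𝓕 ξ := by
  obtain ⟨M, hM, hMZ, hM𝓕⟩ := h𝓕.exists_isCompact_subset_union hZ hAZ hA hA𝓕
  let L (ε : ι) := saturation ε M \ ⋃₀ 𝓕 ε
  have hL : Antitone L := fun ξ ε h =>
    sdiff_subset_sdiff (saturation_antitone M h) (sUnion_mono (h𝓕.monotone h))
  have hcyl (ε : ι) : ∃ p : Finset (ι × Bool), (∀ q ∈ p, q.1 < ε) ∧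
      (cylinder p ∩ L ε).Nonempty ∧ closure (cylinder p ∩ L ε) ⊆ saturation ε Z := by
    obtain ⟨G, hG, hGL⟩ := h𝓕.exists_isGδ_preimage_eq_saturation_diff hM ε
    have hG𝓕 : (Iio ε).domRestrict ⁻¹' G ⊆ saturation ε Z := by
      rw [hGL, sdiff_subset_iff, union_comm]
      exact h𝓕.saturation_subset (hMZ ε)
    have hGne : G.Nonempty :=
      nonempty_of_nonempty_preimage (hGL.symm ▸ sdiff_nonempty.2 (hM𝓕 ε))
    simpa only [hGL] using exists_cylinder_closure_subset_saturation hCH hZ hG hGne hG𝓕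
  choose p hp hpL hpZ using hcyl
  obtain ⟨p₀, hp₀⟩ := exists_frequently_eq_of_forall_fst_lt hp
  -- With one cylinder for cofinally many `ε`, the sets `Q ε` decrease to a compact subset of `Z`.
  let Q (ε : ι) := closure (cylinder p₀ ∩ L ε)
  have hQ : Antitone Q := fun ξ ε h => closure_mono (inter_subset_inter_right _ (hL h))
  have hQclosed (ε : ι) : IsClosed (Q ε) := isClosed_closure
  have hQZ : ⋂ ε, Q ε ⊆ Z := by
    refine (subset_iInter fun γ => ?_).trans (iInter_saturation_subset_of_isLindelof hZ.isLindelof)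
    obtain ⟨ε, rfl, hε⟩ := (hp₀.and_eventually (eventually_ge_atTop γ)).exists
    exact (iInter_subset Q ε).trans ((hpZ ε).trans (saturation_antitone Z hε))
  refine ⟨_, hQZ, (isClosed_iInter hQclosed).isCompact, fun γ hγ => ?_⟩
  obtain ⟨ε, rfl, hε, hQε⟩ := (hp₀.and_eventually
    (.and (hγ.mono fun _ => not_not.1) (eventually_subset_saturation_iInter hQ hQclosed γ))).exists
  obtain ⟨y, hy⟩ := hpL ε
  exact hy.2.2 ⟨_, hε, hQε (subset_closure hy)⟩

end IsClosedFiltration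

end Filtration

theorem exists_isCompact_forall_compl_saturation_notMem {ι : Type u} [LinearOrder ι]
    [IsOmegaOne ι] (hCH : 𝔠 = (ℵ₁ : Cardinal.{u})) {Z : Set (ι → Bool)}
    (hZ : ProductivelyQuasiLindelofSp Z) {l : Filter (ι → Bool)} [NeBot l]
    [CountableInterFilter l] (hl : l ≤ 𝓟 Z) :
    ∃ C ⊆ Z, IsCompact C ∧ ∀ γ, (saturation γ C)ᶜ ∉ l := by
  by_contra! hcon
  let 𝓢 := {F : Set (ι → Bool) | (∃ ξ, IsClosedBelow ξ F) ∧ Fᶜ ∈ l}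
  have h𝓢 : #𝓢 ≤ ℵ₁ :=
    (mk_le_mk_of_subset fun F hF => hF.1).trans (mk_setOf_exists_isClosedBelow_le_aleph_one hCH)
  have hmem {γ : ι} {C : Set (ι → Bool)} (hC : IsCompact C) (h : (saturation γ C)ᶜ ∈ l) :
      saturation γ C ∈ 𝓢 := ⟨⟨γ, isClosedBelow_saturation γ hC⟩, h⟩
  obtain ⟨A, hAZ, hA, hA𝓢⟩ := exists_uncountable_forall_countable_inter (Z := Z) h𝓢
    (fun z hz => by
      obtain ⟨γ, hγ⟩ := hcon {z} (singleton_subset_iff.2 hz) isCompact_singleton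
      exact ⟨_, hmem isCompact_singleton hγ, subset_saturation γ _ rfl⟩)
    (fun 𝓢' h𝓢' hcount hcover => by
      obtain ⟨z, hz, hz𝓢⟩ := (Eventually.and (le_principal_iff.1 hl)
        ((eventually_countable_ball hcount).2 fun F hF => (h𝓢' hF).2)).exists
      obtain ⟨F, hF, hzF⟩ := hcover hz
      exact hz𝓢 F hF hzF)
  obtain ⟨𝓕, h𝓕, h𝓕𝓢, hev⟩ := exists_isClosedFiltration h𝓢 fun F hF => hF.1
  have hA𝓕 (ξ : ι) : (A ∩ ⋃₀ 𝓕 ξ).Countable := by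
    rw [sUnion_eq_biUnion, inter_iUnion₂]
    exact (h𝓕.countable ξ).biUnion fun F hF => hA𝓢 F (h𝓕𝓢 ξ hF)
  obtain ⟨C, hCZ, hC, hC𝓕⟩ :=
    h𝓕.exists_isCompact_frequently_saturation_notMem hCH hZ hAZ hA hA𝓕
  obtain ⟨γ, hγ⟩ := hcon C hCZ hC
  exact hC𝓕 γ ((hev _ (hmem hC hγ)).mono fun _ => not_not.2)

theorem isAlster_of_productivelyQuasiLindelofSp {ι : Type u} [LinearOrder ι] [IsOmegaOne ι]
    (hCH : 𝔠 = (ℵ₁ : Cardinal.{u})) {Z : Set (ι → Bool)}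
    (hZ : ProductivelyQuasiLindelofSp Z) : IsAlster Z := by
  intro l _ _ hl
  obtain ⟨C, hCZ, hC, hCl⟩ := exists_isCompact_forall_compl_saturation_notMem hCH hZ hl
  let m : Filter (ι → Bool) := atTop.bind fun γ => 𝓟 (saturation γ C)
  have hm : CountableInterFilter m := ⟨fun S hS h => by
    refine mem_bind'.2 ?_
    filter_upwards [(eventually_countable_ball hS).2 fun s hs => mem_bind'.1 (h s hs)] with γ hγ
    exact subset_sInter hγ⟩
  refine ⟨l ⊓ m, inf_le_left, inf_neBot_iff.2 fun s hs t ht => ?_, inferInstance, C, hCZ, hC,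
    inf_le_right.trans (bind_principal_saturation_le_nhdsSet hC)⟩
  obtain ⟨γ, hγ⟩ : ∃ γ, saturation γ C ⊆ t := Eventually.exists (mem_bind'.1 ht)
  by_contra hst
  refine hCl γ (mem_of_superset hs fun x hxs hx => hst ⟨x, hxs, hγ hx⟩)

section UpperHull

variable {ι X : Type u} {W : ι → Set X}

/-- The upward closure in the Cantor cube of the traces `{α | x ∈ W α}` of the points of `X` on a
family `W` of subsets of `X`. Closing upwards makes it a continuous image of a closed subset of
`X × (ι → Bool)` when the members of `W` are open. -/
def upperHull (W : ι → Set X) : Set (ι → Bool) :=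
  {z | ∃ x, ∀ α, x ∈ W α → z α = true}

theorem productivelyQuasiLindelofSp_upperHull [TopologicalSpace X]
    (hX : ProductivelyQuasiLindelofSp X) (hW : ∀ α, IsOpen (W α)) :
    ProductivelyQuasiLindelofSp (upperHull W) := by
  intro Y _ hY
  have : LindelofSpace (X × Y) := quasiLindelofSp_iff_lindelofSpace.1 (hX Y hY)
  let K : Set ((X × Y) × (ι → Bool)) := {p | ∀ α, p.1.1 ∈ W α → p.2 α = true}
  have hKclosed : IsClosed K := by
    simp only [K, ofPred_forall]
    exact isClosed_iInter fun α => isClosed_imp ((hW α).preimage (by fun_prop))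
      (isClosed_eq (by fun_prop) continuous_const)
  have hK : IsLindelof K := (isLindelof_preimage_of_isProperMap
    (isProperMap_fst_of_compactSpace (Y := ι → Bool)) isLindelof_univ).of_isClosed_subset hKclosed
    (subset_univ K)
  have : LindelofSpace K := isLindelof_iff_lindelofSpace.1 hK
  let f (p : K) : upperHull W × Y := (⟨p.1.2, p.1.1.1, p.2⟩, p.1.1.2)
  refine quasiLindelofSp_iff_lindelofSpace.2 (.of_continuous_surjective (f := f) (by fun_prop) ?_)
  rintro ⟨⟨z, x, hx⟩, y⟩
  exact ⟨⟨((x, y), z), hx⟩, rfl⟩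

theorem exists_countable_iUnion_pi_eq_univ_of_isLindelof_pi_upperHull {J κ : Type*}
    (hW : IsLindelof (univ.pi fun _ : J => upperHull W)) {I : κ → Finset J} {a : κ → J → ι}
    (hcover : ⋃ k, (I k : Set J).pi (fun i => W (a k i)) = Set.univ) :
    ∃ t : Set κ, t.Countable ∧ ⋃ k ∈ t, (I k : Set J).pi (fun i => W (a k i)) = Set.univ := by
  classical
  let B (k : κ) : Set (J → ι → Bool) := (I k : Set J).pi fun i => eval (a k i) ⁻¹' {true}
  have hB (k : κ) : IsOpen (B k) := isOpen_set_pi (I k).finite_toSet fun i _ =>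
    (isOpen_discrete {true}).preimage (continuous_apply (a k i))
  obtain ⟨t, ht, htB⟩ := hW.elim_countable_subcover B hB fun z hz => by
    choose x hx using fun i => hz i trivial
    obtain ⟨k, hk⟩ := mem_iUnion.1 (hcover.ge (mem_univ x))
    exact mem_iUnion.2 ⟨k, fun i hi => hx i _ (hk i hi)⟩
  refine ⟨t, ht, eq_univ_of_forall fun x => ?_⟩
  let z (i : J) (α : ι) : Bool := decide (x i ∈ W α)
  have hz : z ∈ univ.pi fun _ : J => upperHull W := fun i _ => ⟨x i, fun α => decide_eq_true⟩
  obtain ⟨k, hk, hzk⟩ := mem_iUnion₂.1 (htB hz)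
  exact mem_iUnion₂.2 ⟨k, hk, fun i hi => of_decide_eq_true (hzk i hi)⟩

end UpperHull

section LindelofNumber

variable {X : Type u} [TopologicalSpace X]

theorem LindelofNumberLE.exists_iUnion_nhds_eq_univ {κ : Cardinal.{u}} (h : LindelofNumberLE X κ)
    {U : X → Set X} (hU : ∀ x, U x ∈ 𝓝 x) : ∃ T : Set X, #T ≤ κ ∧ ⋃ x ∈ T, U x = Set.univ := by
  obtain ⟨𝒱, h𝒱, hcard, hcover⟩ := h (range fun x => interior (U x))
    (forall_mem_range.2 fun x => isOpen_interior)
    (sUnion_eq_univ_iff.2 fun x => ⟨_, mem_range_self x, mem_interior_iff_mem_nhds.2 (hU x)⟩)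
  choose g hg using fun V : 𝒱 => h𝒱 V.2
  refine ⟨range g, mk_range_le.trans hcard, eq_univ_of_forall fun y => ?_⟩
  obtain ⟨V, hV, hy⟩ := sUnion_eq_univ_iff.1 hcover y
  exact mem_iUnion₂.2 ⟨_, mem_range_self ⟨V, hV⟩, interior_subset ((hg ⟨V, hV⟩).ge hy)⟩

theorem exists_isOpen_subset_range_of_mk_le {ι : Type u} {𝒲 : Set (Set X)}
    (h𝒲 : ∀ W ∈ 𝒲, IsOpen W) (hcard : #𝒲 ≤ #ι) :
    ∃ W : ι → Set X, (∀ α, IsOpen (W α)) ∧ 𝒲 ⊆ range W := by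
  obtain ⟨e⟩ : Nonempty (𝒲 ↪ ι) := (Cardinal.le_def _ _).1 hcard
  refine ⟨extend e (↑) fun _ => univ, fun α => ?_, fun V hV => ⟨e ⟨V, hV⟩, ?_⟩⟩
  · by_cases hα : ∃ V, e V = α
    · obtain ⟨V, rfl⟩ := hα
      rw [e.injective.extend_apply]
      exact h𝒲 V V.2
    · rw [extend_apply' _ _ _ hα]
      exact isOpen_univ
  · exact e.injective.extend_apply _ _ _

theorem LindelofNumberLE.exists_iUnion_pi_eq_univ {J : Type} {ι : Type u} [Infinite ι]
    (h : LindelofNumberLE (J → X) #ι) {𝒰 : Set (Set (J → X))} (h𝒰 : ∀ U ∈ 𝒰, IsOpen U)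
    (hcover : ⋃₀ 𝒰 = Set.univ) :
    ∃ W : ι → Set X, (∀ α, IsOpen (W α)) ∧ ∃ (κ : Type u) (I : κ → Finset J) (a : κ → J → ι),
      ⋃ k, (I k : Set J).pi (fun i => W (a k i)) = Set.univ ∧
      ∀ k, ∃ U ∈ 𝒰, (I k : Set J).pi (fun i => W (a k i)) ⊆ U := by
  choose U hU hxU using fun x => sUnion_eq_univ_iff.1 hcover x
  choose I V hV hVU using fun x => isOpen_pi_iff.1 (h𝒰 _ (hU x)) x (hxU x)
  obtain ⟨T, hT, hTcover⟩ := h.exists_iUnion_nhds_eq_univ (U := fun x => (I x : Set J).pi (V x))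
    fun x => (set_pi_mem_nhds (I x).finite_toSet fun i hi => (hV x i hi).1.mem_nhds (hV x i hi).2)
  let 𝒲 : Set (Set X) := ⋃ x : T, V x '' I x
  have h𝒲 : #𝒲 ≤ #ι := by
    have hcount (x : T) : #(V x '' I x) ≤ ℵ₀ := ((I x).finite_toSet.image (V x)).countable.le_aleph0
    calc #𝒲 ≤ #T * ⨆ x : T, #(V x '' I x) := mk_iUnion_le _
      _ ≤ #ι * ℵ₀ := mul_le_mul' hT (ciSup_le' hcount)
      _ = #ι := mul_aleph0_eq (aleph0_le_mk ι)
  obtain ⟨W, hW, h𝒲W⟩ := exists_isOpen_subset_range_of_mk_le (𝒲 := 𝒲) (by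
    rintro _ ⟨_, ⟨x, rfl⟩, i, hi, rfl⟩
    exact (hV x i hi).1) h𝒲
  have hVW (x : T) (i : J) (hi : i ∈ I x) : ∃ α, W α = V x i :=
    h𝒲W (mem_iUnion.2 ⟨x, i, hi, rfl⟩)
  choose! a ha using hVW
  have hbox (x : T) : (I x : Set J).pi (fun i => W (a x i)) = (I x : Set J).pi (V x) :=
    pi_congr rfl fun i hi => ha x i hi
  refine ⟨W, hW, T, fun x => I x, a, ?_, fun x => ⟨U x, hU x, (hbox x).trans_subset (hVU x)⟩⟩
  simpa only [hbox, biUnion_eq_iUnion] using hTcover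

end LindelofNumber

/-- Under CH, every productively quasi-Lindelöf space X with
ℓ(X^ω) ≤ 𝔠 is powerfully quasi-Lindelöf. -/
theorem stmt14 (hCH : Cardinal.continuum = Cardinal.aleph 1)
    (X : Type u) [TopologicalSpace X]
    (hprod : ProductivelyQuasiLindelofSp X)
    (hl : LindelofNumberLE (ℕ → X) Cardinal.continuum) :
    PowerfullyQuasiLindelofSp X := by
  have hCH' : (𝔠 : Cardinal.{u}) = ℵ₁ :=
    lift_injective (by simpa using congrArg Cardinal.lift.{u} hCH)
  rw [hCH', ← mk_ord_toType ℵ₁] at hl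
  intro 𝒰 h𝒰 hcover
  obtain ⟨W, hW, κ, I, a, hbox, hboxU⟩ := hl.exists_iUnion_pi_eq_univ h𝒰 hcover
  have hL : IsLindelof (univ.pi fun _ : ℕ => upperHull W) :=
    isLindelof_univ_pi_of_isAlster fun _ =>
      isAlster_of_productivelyQuasiLindelofSp hCH'
        (productivelyQuasiLindelofSp_upperHull hprod hW)
  obtain ⟨t, ht, htcover⟩ :=
    exists_countable_iUnion_pi_eq_univ_of_isLindelof_pi_upperHull hL hbox
  choose U hU hboxU using hboxU
  refine ⟨U '' t, image_subset_iff.2 fun k _ => hU k, ht.image U, eq_univ_of_forall fun x => ?_⟩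
  obtain ⟨k, hk, hx⟩ := mem_iUnion₂.1 (htcover.ge (mem_univ x))
  exact ⟨U k, mem_image_of_mem U hk, hboxU k hx⟩
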